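/- arXiv:1812.03452 — 5 statements merged into one kernel-verified Lean document; each statement's English description precedes it below -/
import Mathlib

section
/- Let G be a group and i an integer such that the group cohomology H^i(G, ZG) (with coefficients in the group ring ZG regarded as a G-module via left multiplication) is finitely generated as an abelian group. Let A be a ZG-module whose underlying abelian group is finitely generated and free. Then Ext^i_{ZG}(A, ZG) is a finitely generated abelian group. -/
open CategoryTheory Opposite

/-- `Ext^i_{ℤG}(A, ℤG)` as an abelian group (a `ℤ`-module), where `ℤG` is the
integral group ring `MonoidAlgebra ℤ G` acting on itself by left multiplication. -/
noncomputable def extZG (G : Type) [Group G] (i : ℕ)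
    (A : Type) [AddCommGroup A] [Module (MonoidAlgebra ℤ G) A] : ModuleCat ℤ :=
  ((Ext ℤ (ModuleCat (MonoidAlgebra ℤ G)) i).obj
    (op (ModuleCat.of (MonoidAlgebra ℤ G) A))).obj
    (ModuleCat.of (MonoidAlgebra ℤ G) (MonoidAlgebra ℤ G))

open MonoidalCategory

section
variable {k G : Type} [CommRing k] [Group G] (B : Rep.{0} k G)

theorem aux_preserves_epi [Module.Free k B.V] : (Rep.ihom B).PreservesEpimorphisms where
  preserves {X Y} f hf := by
    rw [Rep.epi_iff_surjective] at hf ⊢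
    intro g
    obtain ⟨h, hh⟩ := Module.projective_lifting_property f.hom.toLinearMap
      (show B.V →ₗ[k] Y.V from g) hf
    exact ⟨h, hh⟩

instance aux_preserves_mono [Module.Free k B.V] : (tensorLeft B).PreservesMonomorphisms where
  preserves {X Y} f hf := by
    rw [Rep.mono_iff_injective] at hf ⊢
    exact Module.Flat.lTensor_preserves_injective_linearMap (M := B.V) f.hom.toLinearMap hf

noncomputable def auxF : Rep.{0} k G ⥤ ModuleCat.{0} (MonoidAlgebra k G) :=
  tensorLeft B ⋙ Rep.toModuleMonoidAlgebra

noncomputable def auxAdj : auxF B ⊣ Rep.ofModuleMonoidAlgebra ⋙ ihom B :=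
  (ihom.adjunction B).comp (Rep.equivalenceModuleMonoidAlgebra (k := k) (G := G)).toAdjunction

instance aux_add1 : (Rep.toModuleMonoidAlgebra (k := k) (G := G)).Additive where
  map_add := rfl
instance aux_add2 : (auxF B).Additive := by unfold auxF; infer_instance

instance aux_mono2 [Module.Free k B.V] : (auxF B).PreservesMonomorphisms := by
  unfold auxF; infer_instance

instance aux_proj [Module.Free k B.V] : (auxF B).PreservesProjectiveObjects where
  projective_obj {X} hX := by
    have : (ihom B).PreservesEpimorphisms := aux_preserves_epi B
    exact (auxAdj B).map_projective X hX

instance aux_left : (auxF B).IsLeftAdjoint := ⟨_, ⟨auxAdj B⟩⟩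
instance aux_hom [Module.Free k B.V] : (auxF B).PreservesHomology := 
  Functor.preservesHomology_of_preservesMonos_and_cokernels _

end

section
universe vv
variable {R C D : Type*} [Ring R] [Category.{vv} C] [Category.{vv} D] [Abelian C] [Abelian D]
  [Linear R C] [Linear R D] {F : C ⥤ D} [F.Additive] {H : D ⥤ C}

noncomputable def auxHomEquiv [F.Linear R] (adj : F ⊣ H) (X : C) (Y : D) :
    (X ⟶ H.obj Y) ≃ₗ[R] (F.obj X ⟶ Y) where
  __ := (adj.homEquiv X Y).symm
  map_add' f g := by simp [Adjunction.homEquiv_counit]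
  map_smul' n f := by
    simp [Adjunction.homEquiv_counit]

noncomputable def auxYonIso [F.Linear R] (adj : F ⊣ H) (P : ChainComplex C ℕ) (Y : D) :
    P.linearYonedaObj R (H.obj Y) ≅
    ChainComplex.linearYonedaObj ((F.mapHomologicalComplex _).obj P) R Y :=
  HomologicalComplex.Hom.isoOfComponents
    (fun n ↦ (auxHomEquiv adj (P.X n) Y).toModuleIso) fun i j _ ↦ by
      ext f
      exact (adj.homEquiv_naturality_left_symm (P.d j i) f).symm

theorem aux_finite {C ι : Type*} [Category* C] [Preadditive C] [Fintype ι]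
    (F : C ⥤ ModuleCat R) [F.Additive]
    {X Y : C} (p : ι → (Y ⟶ X)) (q : ι → (X ⟶ Y)) (h : ∑ j, p j ≫ q j = 𝟙 Y)
    (hX : Module.Finite R (F.obj X)) : Module.Finite R (F.obj Y) := by
  have h1 := congrArg F.map h
  simp only [F.map_sum, F.map_comp, F.map_id] at h1
  let s : (ι → F.obj X) →ₗ[R] F.obj Y := ∑ j, (F.map (q j)).hom ∘ₗ LinearMap.proj j
  refine Module.Finite.of_surjective s fun y ↦ ⟨fun j ↦ F.map (p j) y, ?_⟩
  have h2 := congrArg (fun f ↦ f.hom y) h1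
  simpa [s, ModuleCat.hom_sum] using h2

end

section
variable {k G ι : Type} [CommRing k] [Group G] [Fintype ι] (B : Rep.{0} k G) (b : Module.Basis ι k B.V)

/-- Pointwise multiplication by a function. -/
noncomputable def auxMul (φ : G → k) : MonoidAlgebra k G →ₗ[k] MonoidAlgebra k G :=
  (MonoidAlgebra.coeffLinearEquiv k).symm.toLinearMap ∘ₗ
    (Finsupp.lift _ k G (fun g ↦ Finsupp.single g (φ g))) ∘ₗ
    (MonoidAlgebra.coeffLinearEquiv k).toLinearMap

theorem auxMul_coeff (φ : G → k) (x : MonoidAlgebra k G) (g : G) :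
    (auxMul φ x).coeff g = φ g * x.coeff g := by
  classical
  simp [auxMul, Finsupp.single_apply, Finsupp.sum]
  by_cases h : x.coeff g = 0 <;> simp [h, mul_comm]

noncomputable def auxP0 (j : ι) : (B.V →ₗ[k] MonoidAlgebra k G) →ₗ[k] MonoidAlgebra k G :=
  ∑ i, auxMul (fun g ↦ b.repr (B.ρ g (b j)) i) ∘ₗ LinearMap.applyₗ (b i)

theorem auxP0_coeff (j : ι) (f : B.V →ₗ[k] MonoidAlgebra k G) (g : G) :
    (auxP0 B b j f).coeff g = (f (B.ρ g (b j))).coeff g := by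
  have h : ∀ v : B.V, (f v).coeff g = ∑ i, b.repr v i * (f (b i)).coeff g := by
    intro v
    conv_lhs => rw [← b.sum_repr v]
    rw [map_sum, MonoidAlgebra.coeff_sum, Finsupp.finsetSum_apply]
    refine Finset.sum_congr rfl fun i _ ↦ ?_
    rw [map_smul]
    simp
  rw [h]
  simp [auxP0, auxMul_coeff, Finsupp.finsetSum_apply]

noncomputable def auxP (j : ι) : (Rep.ihom B).obj (Rep.leftRegular k G) ⟶ Rep.leftRegular k G :=
  Rep.ofHom ⟨auxP0 B b j, fun g ↦ by
    ext f h
    change (auxP0 B b j _).coeff h = ((Representation.ofMulAction k G G g) (auxP0 B b j f)).coeff h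
    rw [Representation.coeff_ofMulAction, auxP0_coeff, auxP0_coeff]
    simp⟩

noncomputable def auxQ (j : ι) : Rep.leftRegular k G ⟶ (Rep.ihom B).obj (Rep.leftRegular k G) :=
  Rep.leftRegularHom _ ((LinearMap.toSpanSingleton k (MonoidAlgebra k G) 1) ∘ₗ b.coord j)

theorem auxQ_apply (j : ι) (x : MonoidAlgebra k G) (v : B.V) (g : G) :
    (show B.V →ₗ[k] MonoidAlgebra k G from (auxQ B b j).hom x) v =
      auxMul (fun g ↦ b.repr (B.ρ g⁻¹ v) j) x := by
  suffices h : (LinearMap.applyₗ (R := k) (M₂ := MonoidAlgebra k G) v) ∘ₗ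
      (auxQ B b j).hom.toLinearMap = auxMul (fun g ↦ b.repr (B.ρ g⁻¹ v) j) from
    LinearMap.congr_fun h x
  ext g
  rename_i h
  have h1 := Rep.leftRegularHom_hom_single (A := (Rep.ihom B).obj (Rep.leftRegular k G)) g
    ((LinearMap.toSpanSingleton k (MonoidAlgebra k G) 1) ∘ₗ b.coord j) (1 : k)
  rw [one_smul] at h1
  refine Eq.trans (congrArg (fun u : B.V →ₗ[k] MonoidAlgebra k G ↦ (u v).coeff h) h1) ?_
  change _ = (auxMul (fun g ↦ b.repr (B.ρ g⁻¹ v) j) (MonoidAlgebra.single g 1)).coeff h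
  rw [auxMul_coeff]
  change ((Representation.ofMulAction k G G g) ((b.repr (B.ρ g⁻¹ v) j) • 1)).coeff h = _
  classical
  by_cases hg : g = h
  · subst hg
    simp [MonoidAlgebra.one_def]
  · simp [MonoidAlgebra.one_def, hg]

theorem auxPQ_apply (f : B.V →ₗ[k] MonoidAlgebra k G) (v : B.V) :
    ∑ j, auxMul (fun g ↦ b.repr (B.ρ g⁻¹ v) j) (auxP0 B b j f) = f v := by
  ext g
  rw [MonoidAlgebra.coeff_sum, Finsupp.finsetSum_apply]
  simp only [auxMul_coeff, auxP0_coeff]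
  conv_rhs => rw [← Representation.self_inv_apply B.ρ g v, ← b.sum_repr (B.ρ g⁻¹ v)]
  rw [map_sum, map_sum, MonoidAlgebra.coeff_sum, Finsupp.finsetSum_apply]
  refine Finset.sum_congr rfl fun i _ ↦ ?_
  rw [map_smul, map_smul]
  simp

theorem auxPQ : ∑ j, auxP B b j ≫ auxQ B b j = 𝟙 _ := by
  apply Rep.hom_ext
  rw [Rep.sum_hom]
  apply Representation.IntertwiningMap.ext
  apply LinearMap.ext
  intro (f : B.V →ₗ[k] MonoidAlgebra k G)
  refine LinearMap.ext (R := k) (M := B.V) (M₃ := MonoidAlgebra k G) fun v ↦ ?_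
  refine Eq.trans ?_ (auxPQ_apply B b f v)
  simp only [← auxQ_apply B b _ _ v 1]
  have h := LinearMap.sum_apply (R := k) (M := B.V) (M₂ := MonoidAlgebra k G) Finset.univ
    (fun j ↦ (auxQ B b j).hom (auxP0 B b j f)) v
  refine Eq.trans ?_ h
  rw [Representation.IntertwiningMap.toLinearMap_sum]
  exact congrArg (fun u : B.V →ₗ[k] MonoidAlgebra k G ↦ u v) (LinearMap.sum_apply Finset.univ
    (fun j ↦ (auxP B b j ≫ auxQ B b j).hom.toLinearMap) f)

theorem aux_finite_coh [Module.Free k B.V] [Module.Finite k B.V] (i : ℕ)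
    (h : Module.Finite k (groupCohomology (Rep.leftRegular k G) i)) :
    Module.Finite k (groupCohomology ((Rep.ihom B).obj (Rep.leftRegular k G)) i) := 
  aux_finite (groupCohomology.cochainsFunctor k G ⋙ HomologicalComplex.homologyFunctor _ _ i)
    _ _ (auxPQ B (Module.Free.chooseBasis k B.V)) h

theorem aux_finite_ext [Module.Free k B.V] [Module.Finite k B.V] (i : ℕ)
    [Linear k (ModuleCat (MonoidAlgebra k G))] [(auxF B).Linear k]
    (h : Module.Finite k (groupCohomology (Rep.leftRegular k G) i)) :
    Module.Finite k (((Ext k (ModuleCat (MonoidAlgebra k G)) i).obj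
    (op (Rep.toModuleMonoidAlgebra.obj B))).obj
    (Rep.toModuleMonoidAlgebra.obj (Rep.leftRegular k G))) := by
  have h1 := aux_finite_coh B i h
  let P := Rep.barResolution k G
  let PA := (auxF B).mapProjectiveResolution P
  let Y := (Rep.toModuleMonoidAlgebra.obj (Rep.leftRegular k G))
  let e1 : (auxF B).obj (Rep.trivial k G k) ≅ Rep.toModuleMonoidAlgebra.obj B :=
    Rep.toModuleMonoidAlgebra.mapIso (ρ_ B)
  let e2 : (Rep.ofModuleMonoidAlgebra ⋙ ihom B).obj Y ≅ (Rep.ihom B).obj (Rep.leftRegular k G) :=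
    (Rep.ihom B).mapIso (Rep.unitIso (Rep.leftRegular k G)).symm
  let E := ((Ext k (ModuleCat (MonoidAlgebra k G)) i).mapIso e1.op).app Y ≪≫ PA.isoExt i Y ≪≫
    (HomologicalComplex.homologyFunctor _ _ i).mapIso
      (auxYonIso (R := k) (auxAdj B) P.complex Y).symm ≪≫
    (groupCohomologyIso _ i P).symm ≪≫
    (groupCohomology.functor k G i).mapIso e2
  exact @Module.Finite.equiv _ _ _ _ _ _ _ _ h1 E.toLinearEquiv.symm
end

theorem aux_smul_int {V W : Type*} [AddCommGroup V] [AddCommGroup W] (m : Module ℤ V)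
    (mW : Module ℤ W) (f : V →+ W) (n : ℤ) (x : V) : f (m.smul n x) = mW.smul n (f x) := by
  obtain rfl := Subsingleton.elim m (AddCommGroup.toIntModule V)
  obtain rfl := Subsingleton.elim mW (AddCommGroup.toIntModule W)
  exact map_zsmul f n x

theorem aux_free_int {V : Type*} [AddCommGroup V] [h : Module.Free ℤ V] (m : Module ℤ V) :
    @Module.Free ℤ V _ _ m := by
  obtain rfl := Subsingleton.elim m (AddCommGroup.toIntModule V)
  exact h

theorem aux_finite_int {V : Type*} [AddCommGroup V] [h : Module.Finite ℤ V] (m : Module ℤ V) :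
    @Module.Finite ℤ V _ _ m := by
  obtain rfl := Subsingleton.elim m (AddCommGroup.toIntModule V)
  exact h

theorem aux_linear {C D : Type*} [Category* C] [Category* D] [Preadditive C] [Preadditive D]
    {_ : Linear ℤ C} {_ : Linear ℤ D} (F : C ⥤ D) [F.Additive] : F.Linear ℤ where
  map_smul {X Y} f n := aux_smul_int _ _ (F.mapAddHom (X := X) (Y := Y)) n f

theorem aux_fg (M : ModuleCat ℤ) : AddGroup.FG M ↔ Module.Finite ℤ M := by
  rw [← Module.Finite.iff_addGroup_fg]
  have : M.isModule = AddCommGroup.toIntModule _ := Subsingleton.elim _ _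
  rw [this]

/-- If `H^i(G, ℤG)` is a finitely generated abelian group and `A` is a `ℤG`-module whose
underlying abelian group is finitely generated and free, then `Ext^i_{ℤG}(A, ℤG)` is a
finitely generated abelian group. -/
theorem stmt0 (G : Type) [Group G] (i : ℕ)
    (hG : AddGroup.FG (groupCohomology (Rep.ofMulAction ℤ G G) i))
    (A : Type) [AddCommGroup A] [Module (MonoidAlgebra ℤ G) A]
    [Module.Free ℤ A] [Module.Finite ℤ A] :
    AddGroup.FG (extZG G i A) := by
  rw [aux_fg] at hG ⊢
  let M := ModuleCat.of (MonoidAlgebra ℤ G) A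
  let B : Rep ℤ G := Rep.ofModuleMonoidAlgebra.obj M
  have : @Module.Free ℤ B.V _ _ B.hV2 := aux_free_int (V := A) B.hV2
  have : @Module.Finite ℤ B.V _ _ B.hV2 := aux_finite_int (V := A) B.hV2
  have h := @aux_finite_ext _ _ _ _ B _ _ i _ (aux_linear (auxF B)) hG
  let e1 : Rep.toModuleMonoidAlgebra.obj B ≅ M := Rep.counitIso M
  let e2 : Rep.toModuleMonoidAlgebra.obj (Rep.leftRegular ℤ G) ≅
      ModuleCat.of (MonoidAlgebra ℤ G) (MonoidAlgebra ℤ G) :=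
    Representation.ofMulActionSelfAsModuleEquiv.toModuleIso
  let E := ((Ext ℤ (ModuleCat (MonoidAlgebra ℤ G)) i).mapIso e1.symm.op).app _ ≪≫
    ((Ext ℤ (ModuleCat (MonoidAlgebra ℤ G)) i).obj _).mapIso e2
  exact @Module.Finite.equiv _ _ _ _ _ _ _ _ h E.toLinearEquiv
end

section
/- Let H be a subgroup of finite index in a group G. Then for every integer i, the isomorphism Hom_{ZH}(ZG, ZH) ≅ ZG of ZG-modules together with the Eckmann–Shapiro lemma yields: H^i(G, ZG) is finitely generated as an abelian group if and only if H^i(H, ZH) is finitely generated as an abelian group. -/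
open CategoryTheory Representation in
/-- Two morphisms out of the regular representation agreeing at `1` are equal. -/
theorem leftRegular_hom_ext_one {k G : Type} [CommRing k] [Group G] {A : Rep.{0} k G}
    (f g : Rep.leftRegular k G ⟶ A)
    (h : f.hom (MonoidAlgebra.single 1 1) = g.hom (MonoidAlgebra.single 1 1)) : f = g := by
  have key : ∀ (f : Rep.leftRegular k G ⟶ A) (x : G),
      f.hom (MonoidAlgebra.single x 1) = A.ρ x (f.hom (MonoidAlgebra.single 1 1)) := by
    intro f x
    rw [← Rep.hom_comm_apply f x (MonoidAlgebra.single 1 1)]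
    simp
  apply Rep.hom_ext
  apply Representation.IntertwiningMap.toLinearMap_injective
  refine MonoidAlgebra.lhom_ext' fun x => LinearMap.ext_ring ?_
  exact (key f x).trans ((congrArg _ h).trans (key g x).symm)

open CategoryTheory Representation in
/-- The induction of the regular representation is the regular representation. -/
noncomputable def indLeftRegularIso {k G : Type} [CommRing k] [Group G] (H : Subgroup G) :
    Rep.ind H.subtype (Rep.leftRegular k H) ≅ Rep.leftRegular k G where
  hom := (Rep.indResHomEquiv.{0} H.subtype (Rep.leftRegular k H) (Rep.leftRegular k G)).symm
    (Rep.leftRegularHom (Rep.res H.subtype (Rep.leftRegular k G)) (MonoidAlgebra.single 1 1))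
  inv := Rep.leftRegularHom _ (IndV.mk H.subtype _ 1 (MonoidAlgebra.single 1 1))
  hom_inv_id := by
    apply (Rep.indResHomEquiv.{0} H.subtype _ _).injective
    apply leftRegular_hom_ext_one
    simp
  inv_hom_id := by
    apply leftRegular_hom_ext_one
    simp

/-- If `H` is a finite-index subgroup of `G`, then for every `i`, the group cohomology
`H^i(G, ℤG)` is finitely generated as an abelian group if and only if `H^i(H, ℤH)` is
finitely generated as an abelian group.  Here the group ring is the left regular
representation `Rep.ofMulAction ℤ G G`. -/
theorem stmt4 (G : Type) [Group G] (H : Subgroup G) [H.FiniteIndex] (i : ℕ) :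
    AddGroup.FG (groupCohomology (Rep.ofMulAction ℤ G G) i) ↔
    AddGroup.FG (groupCohomology (Rep.ofMulAction ℤ H H) i) := by
  classical
  have e : Rep.coind H.subtype (Rep.leftRegular ℤ H) ≅ Rep.leftRegular ℤ G :=
    (Rep.indCoindIso.{0} (Rep.leftRegular ℤ H)).symm ≪≫ indLeftRegularIso (k := ℤ) H
  have e2 : groupCohomology (Rep.ofMulAction ℤ G G) i ≅ groupCohomology (Rep.ofMulAction ℤ H H) i :=
    (groupCohomology.functor ℤ G i).mapIso e.symm ≪≫
      groupCohomology.coindIso (Rep.leftRegular ℤ H) i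
  have e3 := e2.toLinearEquiv.toAddEquiv
  constructor
  · intro h
    exact AddGroup.fg_of_surjective (f := e3.toAddMonoidHom) e3.surjective
  · intro h
    exact AddGroup.fg_of_surjective (f := e3.symm.toAddMonoidHom) e3.symm.surjective
end

section
/- Let G be a group and i an integer such that H^i(G, ZG) and H^{i-1}(G, ZG) are both finitely generated abelian groups. Let A be a ZG-module whose underlying abelian group is finitely generated. Then Ext^i_{ZG}(A, ZG) is a finitely generated abelian group. -/
open CategoryTheory Opposite

lemma fg_of_surj_ker {Z E H : Type*} [AddCommGroup Z] [AddCommGroup E] [AddCommGroup H]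
    (p : Z →+ E) (q : Z →+ H) (hp : Function.Surjective p) (hq : Function.Surjective q)
    (h : ∀ z, p z = 0 → q z = 0) (hE : AddGroup.FG E) : AddGroup.FG H := by
  let e := (QuotientAddGroup.quotientKerEquivOfSurjective p hp).symm
  let l : Z ⧸ p.ker →+ H := QuotientAddGroup.lift p.ker q (fun z hz => h z hz)
  have hl : Function.Surjective (l.comp e.toAddMonoidHom) := by
    intro y
    obtain ⟨z, rfl⟩ := hq y
    refine ⟨e.symm (z : Z ⧸ p.ker), ?_⟩
    show l (e (e.symm _)) = _
    rw [e.apply_symm_apply]; rfl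
  exact AddGroup.fg_of_surjective hl

lemma fg_of_exact {A B C : Type*} [AddCommGroup A] [AddCommGroup B] [AddCommGroup C]
    (f : A →+ B) (g : B →+ C) (h : ∀ b, g b = 0 → ∃ a, f a = b)
    (hA : AddGroup.FG A) (hC : AddGroup.FG C) : AddGroup.FG B := by
  rw [← Module.Finite.iff_addGroup_fg] at *
  refine ⟨Submodule.fg_of_fg_map_of_fg_inf_ker g.toIntLinearMap ?_ ?_⟩
  · exact IsNoetherian.noetherian _
  · have : (⊤ ⊓ LinearMap.ker g.toIntLinearMap) =
      ((LinearMap.range f.toIntLinearMap) ⊓ LinearMap.ker g.toIntLinearMap) := by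
      ext b
      simp only [Submodule.mem_inf, Submodule.mem_top, true_and, LinearMap.mem_ker,
        LinearMap.mem_range]
      exact ⟨fun hb => ⟨h b hb, hb⟩, fun hb => hb.2⟩
    rw [this]
    have : IsNoetherian ℤ (LinearMap.range f.toIntLinearMap) := inferInstance
    have h2 := (isNoetherian_submodule.1 this)
    exact h2 _ inf_le_left

section
universe w w' v u v' u'
variable {C : Type u} [Category.{v} C] [Abelian C] [HasExt.{w} C]

lemma extMk_zero_deg {X Y : C} (R : ProjectiveResolution X) (f : R.complex.X 0 ⟶ Y)
    (hf : R.complex.d 1 0 ≫ f = 0) (h : R.extMk f 1 rfl hf = 0) : f = 0 := by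
  open ProjectiveResolution CochainComplex HomComplex in
  simp only [← R.extEquivCohomologyClass.apply_eq_iff_eq,
    extEquivCohomologyClass_extMk, extEquivCohomologyClass_zero,
    CohomologyClass.mk_eq_zero_iff] at h
  rw [Cocycle.toSingleMk_mem_coboundaries_iff _ _ _ _ _ 1 (by simp)] at h
  obtain ⟨g, hg⟩ := h
  have h0 : Limits.IsZero (R.cochainComplex.X 1) := 
    R.cochainComplex.isZero_of_isStrictlyLE 0 1 (by simp)
  rw [h0.eq_of_tgt (R.cochainComplex.d _ 1) 0] at hg
  rw [Limits.zero_comp] at hg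
  exact (cancel_epi (R.cochainComplexXIso (-((0 : ℕ) : ℤ)) 0 rfl).hom).1
    (hg.symm.trans Limits.comp_zero.symm)

lemma ext_fg_x2 {S : ShortComplex C} (hS : S.ShortExact) (Y : C) (n : ℕ)
    (h1 : AddGroup.FG (Abelian.Ext.{w} S.X₁ Y n)) (h3 : AddGroup.FG (Abelian.Ext.{w} S.X₃ Y n)) :
    AddGroup.FG (Abelian.Ext.{w} S.X₂ Y n) :=
  fg_of_exact ((Abelian.Ext.mk₀ S.g).precomp Y (zero_add n))
    ((Abelian.Ext.mk₀ S.f).precomp Y (zero_add n))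
    (fun b hb => Abelian.Ext.contravariant_sequence_exact₂ hS Y b hb) h3 h1

lemma ext_fg_x3 {S : ShortComplex C} (hS : S.ShortExact) (Y : C) (n : ℕ)
    (h1 : AddGroup.FG (Abelian.Ext.{w} S.X₁ Y (n - 1)))
    (h2 : AddGroup.FG (Abelian.Ext.{w} S.X₂ Y n)) :
    AddGroup.FG (Abelian.Ext.{w} S.X₃ Y n) := by
  cases n with
  | zero =>
    have := hS.epi_g
    exact fg_of_exact (0 : PUnit.{1} →+ _) ((Abelian.Ext.mk₀ S.g).precomp Y (zero_add 0))
      (fun b hb => ⟨0, by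
        simpa using (Abelian.Ext.precomp_mk₀_injective_of_epi Y S.g (hb.trans (map_zero _).symm)).symm⟩)
      inferInstance h2
  | succ n =>
    exact fg_of_exact (hS.extClass.precomp Y (add_comm 1 n))
      ((Abelian.Ext.mk₀ S.g).precomp Y (zero_add _))
      (fun b hb => Abelian.Ext.contravariant_sequence_exact₃ hS Y b hb (add_comm 1 n)) h1 h2

lemma ext_fg_retract {ι : Type*} [Fintype ι] (X Y Y' : C) (a : ι → (Y ⟶ Y')) (b : ι → (Y' ⟶ Y))
    (hab : ∑ i, b i ≫ a i = 𝟙 Y') (n : ℕ) (h : AddGroup.FG (Abelian.Ext.{w} X Y n)) :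
    AddGroup.FG (Abelian.Ext.{w} X Y' n) := by
  let φ : (ι → Abelian.Ext.{w} X Y n) →+ Abelian.Ext.{w} X Y' n :=
    ∑ i, ((Abelian.Ext.mk₀ (a i)).postcomp X (add_zero n)).comp (Pi.evalAddMonoidHom _ i)
  have hφ : Function.Surjective φ := by
    intro x
    refine ⟨fun i => x.comp (Abelian.Ext.mk₀ (b i)) (add_zero n), ?_⟩
    have : ∑ i, x.comp (Abelian.Ext.mk₀ (b i ≫ a i)) (add_zero n) = x := by
      have h0 : x.comp (Abelian.Ext.mk₀ (∑ i, b i ≫ a i)) (add_zero n) = x := by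
        rw [hab]; simp
      conv_rhs => rw [← h0]
      have := map_sum (((Abelian.Ext.bilinearComp X Y' Y' n 0 n (add_zero n)) x).comp
        Abelian.Ext.addEquiv₀.symm.toAddMonoidHom) (fun i => b i ≫ a i) Finset.univ
      exact this.symm
    conv_rhs => rw [← this]
    simp [φ]
  have : AddGroup.FG (ι → Abelian.Ext.{w} X Y n) := by
    rw [← Module.Finite.iff_addGroup_fg] at *
    infer_instance
  exact AddGroup.fg_of_surjective hφ

lemma ext_fg_of_iso {X X' : C} (e : X ≅ X') (Y : C) (n : ℕ)
    (h : AddGroup.FG (Abelian.Ext.{w} X Y n)) : AddGroup.FG (Abelian.Ext.{w} X' Y n) := by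
  refine AddGroup.fg_of_surjective (f := (Abelian.Ext.mk₀ e.inv).precomp Y (zero_add n)) ?_
  intro x
  refine ⟨(Abelian.Ext.mk₀ e.hom).comp x (zero_add n), ?_⟩
  simp

/-- cocycles for a projective resolution -/
def cocyc {X : C} (R : ProjectiveResolution X) (Y : C) (n : ℕ) : AddSubgroup (R.complex.X n ⟶ Y) where
  carrier := {f | R.complex.d (n+1) n ≫ f = 0}
  add_mem' := by intro a b ha hb; simp_all
  zero_mem' := by simp
  neg_mem' := by intro a ha; simp_all

noncomputable def cocycToExt {X : C} (R : ProjectiveResolution X) (Y : C) (n : ℕ) :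
    cocyc R Y n →+ Abelian.Ext.{w} X Y n where
  toFun f := R.extMk f.1 (n+1) rfl f.2
  map_zero' := R.extMk_zero _ _
  map_add' _ _ := (R.add_extMk _ _ _ _ _ _).symm

lemma cocycToExt_surj {X : C} (R : ProjectiveResolution X) (Y : C) (n : ℕ) :
    Function.Surjective (cocycToExt.{w} R Y n) := by
  intro x
  obtain ⟨f, hf, rfl⟩ := R.extMk_surjective x (n+1) rfl
  exact ⟨⟨f, hf⟩, rfl⟩

lemma cocycToExt_eq_zero {X : C} (R : ProjectiveResolution X) (Y : C) (n : ℕ) (f : cocyc R Y n) :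
    cocycToExt.{w} R Y n f = 0 ↔
      ∃ p, ∃ (g : R.complex.X p ⟶ Y), R.complex.d n p ≫ g = f.1 := by
  cases n with
  | zero =>
    constructor
    · intro h
      have := extMk_zero_deg R f.1 f.2 h
      exact ⟨0, 0, by simp [this]⟩
    · rintro ⟨p, g, hg⟩
      have : f = 0 := by
        ext1
        rw [← hg, R.complex.shape _ _ (by simp)]
        simp
      simp [this]
  | succ n =>
    refine (R.extMk_eq_zero_iff f.1 (n+2) rfl f.2 n rfl).trans ⟨fun ⟨g, hg⟩ => ⟨n, g, hg⟩, ?_⟩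
    rintro ⟨p, g, hg⟩
    by_cases hp : p = n
    · subst hp; exact ⟨g, hg⟩
    · refine ⟨0, ?_⟩
      rw [← hg, R.complex.shape _ _ (fun h => hp (Nat.succ_injective h))]
      simp

variable {D : Type u'} [Category.{v'} D] [Abelian D] [HasExt.{w'} D]

lemma ext_fg_adj (F : C ⥤ D) (U : D ⥤ C) (adj : F ⊣ U) [F.Additive] [F.PreservesHomology]
    [F.PreservesProjectiveObjects] {X : C} (R : ProjectiveResolution X) (Y : D) (n : ℕ)
    (h : AddGroup.FG (Abelian.Ext.{w} X (U.obj Y) n)) :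
    AddGroup.FG (Abelian.Ext.{w'} (F.obj X) Y n) := by
  let R' := F.mapProjectiveResolution R
  have key : ∀ (f : R.complex.X n ⟶ U.obj Y) , f ∈ cocyc R (U.obj Y) n ↔
      F.map f ≫ adj.counit.app Y ∈ cocyc R' Y n := by
    intro f
    show R.complex.d (n+1) n ≫ f = 0 ↔ F.map (R.complex.d (n+1) n) ≫ F.map f ≫ adj.counit.app Y = 0
    rw [← F.map_comp_assoc]
    constructor
    · intro h; simp [h]
    · intro h
      apply (adj.homEquiv _ _).symm.injective
      simpa [Adjunction.homEquiv_counit] using h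
  let q0 : cocyc R (U.obj Y) n →+ cocyc R' Y n :=
    { toFun := fun f => ⟨F.map f.1 ≫ adj.counit.app Y, (key f.1).1 f.2⟩
      map_zero' := by
        ext1
        exact (congrArg (· ≫ adj.counit.app Y) (F.map_zero _ _)).trans Limits.zero_comp
      map_add' := by
        intro f g
        ext1
        exact (congrArg (· ≫ adj.counit.app Y) F.map_add).trans (Preadditive.add_comp _ _ _ _ _ _) }
  have hq0 : Function.Surjective q0 := by
    have e : ∀ f : F.obj (R.complex.X n) ⟶ Y,
        F.map (adj.homEquiv _ _ f) ≫ adj.counit.app Y = f := by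
      intro f
      simp [Adjunction.homEquiv_unit]
    rintro ⟨f, hf⟩
    refine ⟨⟨adj.homEquiv _ _ f, (key _).2 (by erw [e]; exact hf)⟩, ?_⟩
    ext1
    exact e f
  refine fg_of_surj_ker (cocycToExt.{w} R (U.obj Y) n) ((cocycToExt.{w'} R' Y n).comp q0)
    (cocycToExt_surj _ _ _) ((cocycToExt_surj _ _ _).comp hq0) ?_ h
  intro f hf
  rw [cocycToExt_eq_zero] at hf
  obtain ⟨p, g, hg⟩ := hf
  refine (cocycToExt_eq_zero _ _ _ _).2 ⟨p, F.map g ≫ adj.counit.app Y, ?_⟩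
  show F.map (R.complex.d n p) ≫ F.map g ≫ adj.counit.app Y = F.map f.1 ≫ adj.counit.app Y
  rw [← hg]; simp

lemma ext_fg_iff [Linear ℤ C] [EnoughProjectives C] (X Y : C) (n : ℕ) :
    AddGroup.FG (((Ext ℤ C n).obj (op X)).obj Y) ↔ AddGroup.FG (Abelian.Ext.{w} X Y n) := by
  let R := ProjectiveResolution.of X
  let K := R.complex.linearYonedaObj ℤ Y
  let q0 : K.cycles n →+ cocyc R Y n :=
    { toFun := fun z => ⟨K.iCycles n z, by
        have : (K.iCycles n ≫ K.d n (n+1)) z = 0 := by rw [K.iCycles_d]; rfl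
        exact this⟩
      map_zero' := by ext1; exact map_zero (K.iCycles n).hom
      map_add' := by intro a b; ext1; exact map_add (K.iCycles n).hom a b }
  have hq0 : Function.Surjective q0 := by
    rintro ⟨f, hf⟩
    refine ⟨K.cyclesMk (C := ModuleCat ℤ) f (n+1) (by simp) hf, ?_⟩
    ext1
    exact K.i_cyclesMk (C := ModuleCat ℤ) f (n+1) (by simp) hf
  let p : K.cycles n →+ K.homology n := (K.homologyπ n).hom.toAddMonoidHom
  have hp : Function.Surjective p := (ModuleCat.epi_iff_surjective (K.homologyπ n)).1 inferInstance
  have hpq : ∀ z, p z = 0 ↔ ((cocycToExt.{w} R Y n).comp q0) z = 0 := by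
    intro z
    refine Iff.trans ?_ (cocycToExt_eq_zero _ _ _ _).symm
    constructor
    · intro hz
      have ex : (ShortComplex.mk _ _ (K.toCycles_comp_homologyπ ((ComplexShape.up ℕ).prev n) n)).Exact :=
        ShortComplex.exact_of_g_is_cokernel _ (K.homologyIsCokernel _ n rfl)
      rw [ShortComplex.moduleCat_exact_iff] at ex
      obtain ⟨g, hg⟩ := ex z hz
      refine ⟨_, g, ?_⟩
      have : (K.toCycles ((ComplexShape.up ℕ).prev n) n ≫ K.iCycles n) g = K.iCycles n z :=
        congrArg (K.iCycles n) hg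
      rw [K.toCycles_i] at this
      exact this
    · rintro ⟨m, g, hg⟩
      have hz : K.toCycles m n g = z := by
        apply (ModuleCat.mono_iff_injective (K.iCycles n)).1 inferInstance
        have : (K.toCycles m n ≫ K.iCycles n) g = K.d m n g := by rw [K.toCycles_i]
        exact this.trans hg
      have : (K.toCycles m n ≫ K.homologyπ n) g = 0 := by
        rw [K.toCycles_comp_homologyπ]; rfl
      rw [← hz]
      exact this
  have e : (((Ext ℤ C n).obj (op X)).obj Y) ≃+ K.homology n :=
    (R.isoExt n Y).toLinearEquiv.toAddEquiv
  have hs := (cocycToExt_surj.{w} R Y n).comp hq0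
  constructor
  · intro h
    have : AddGroup.FG (K.homology n) := AddGroup.fg_of_surjective (f := e.toAddMonoidHom) e.surjective
    exact fg_of_surj_ker p _ hp hs (fun z hz => (hpq z).1 hz) this
  · intro h
    have : AddGroup.FG (K.homology n) := fg_of_surj_ker _ p hs hp (fun z hz => (hpq z).2 hz) h
    exact AddGroup.fg_of_surjective (f := e.symm.toAddMonoidHom) e.symm.surjective
end

section LatPart
variable {k : Type} [CommRing k] {G : Type} [Group G] {V : Type} [AddCommGroup V] [Module k V]
  (ρ : Representation k G V) {ι : Type} [Fintype ι]

noncomputable def latALin (b : Module.Basis ι k V) (j : ι) :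
    MonoidAlgebra k G →ₗ[k] (V →ₗ[k] MonoidAlgebra k G) where
  toFun x :=
    { toFun a := MonoidAlgebra.ofCoeff (Finsupp.onFinset x.coeff.support
        (fun g => b.repr (ρ g⁻¹ a) j * x.coeff g) (by
          intro g hg
          rw [Finsupp.mem_support_iff]
          intro h0
          exact hg (by simp [h0])))
      map_add' a a' := by
        ext g
        simp [add_mul]
      map_smul' r a := by
        ext g
        simp [mul_assoc] }
  map_add' x y := by
    ext a g
    simp [mul_add]
  map_smul' r x := by
    ext a g
    simp [mul_left_comm]

@[simp] lemma latALin_coeff (b : Module.Basis ι k V) (j : ι) (x : MonoidAlgebra k G) (a : V) (g : G) :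
    (latALin ρ b j x a).coeff g = b.repr (ρ g⁻¹ a) j * x.coeff g := rfl

open Classical in
noncomputable def latBLin (b : Module.Basis ι k V) (j : ι) :
    (V →ₗ[k] MonoidAlgebra k G) →ₗ[k] MonoidAlgebra k G where
  toFun F := MonoidAlgebra.ofCoeff (Finsupp.onFinset
      (Finset.univ.biUnion fun i => (F (b i)).coeff.support)
      (fun g => (F (ρ g (b j))).coeff g) (by
        intro g hg
        by_contra hn
        simp only [Finset.mem_biUnion, Finset.mem_univ, true_and, not_exists,
          Finsupp.mem_support_iff, not_not] at hn
        apply hg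
        rw [← b.sum_repr (ρ g (b j)), map_sum, MonoidAlgebra.coeff_sum, Finsupp.finsetSum_apply]
        refine Finset.sum_eq_zero fun i _ => ?_
        rw [map_smul, MonoidAlgebra.coeff_smul_apply, hn, smul_zero]))
  map_add' F F' := by ext g; simp
  map_smul' r F := by ext g; simp

@[simp] lemma latBLin_coeff (b : Module.Basis ι k V) (j : ι) (F : V →ₗ[k] MonoidAlgebra k G) (g : G) :
    (latBLin ρ b j F).coeff g = (F (ρ g (b j))).coeff g := rfl

lemma latLin_sum (b : Module.Basis ι k V) (F : V →ₗ[k] MonoidAlgebra k G) :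
    ∑ j, latALin ρ b j (latBLin ρ b j F) = F := by
  ext a g
  rw [LinearMap.sum_apply, MonoidAlgebra.coeff_sum, Finsupp.finsetSum_apply]
  simp only [latALin_coeff, latBLin_coeff]
  have : a = ∑ j, b.repr (ρ g⁻¹ a) j • ρ g (b j) := by
    conv_lhs => rw [← Representation.self_inv_apply ρ g a, ← b.sum_repr (ρ g⁻¹ a)]
    simp only [map_sum, map_smul]
  conv_rhs => rw [this]
  simp [MonoidAlgebra.coeff_sum]

noncomputable def latAInt (b : Module.Basis ι k V) (j : ι) :
    (Representation.leftRegular k G).IntertwiningMap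
      (Representation.linHom ρ (Representation.leftRegular k G)) :=
  ⟨latALin ρ b j, by
    intro h
    refine LinearMap.ext fun x => LinearMap.ext fun a => ?_
    ext g
    simp [Representation.coeff_ofMulAction]⟩

noncomputable def latBInt (b : Module.Basis ι k V) (j : ι) :
    (Representation.linHom ρ (Representation.leftRegular k G)).IntertwiningMap
      (Representation.leftRegular k G) :=
  ⟨latBLin ρ b j, by
    intro h
    ext F g
    simp [Representation.coeff_ofMulAction]⟩

end LatPart

section RepPart
open MonoidalCategory

variable {k : Type} [CommRing k] {G : Type} [Group G]

lemma tensorLeft_preservesHomology (L : Rep.{0} k G) [Module.Free k L.V] :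
    (tensorLeft L).PreservesHomology := by
  have : (tensorLeft L).PreservesMonomorphisms := ⟨by
    intro X Y f hf
    rw [Rep.mono_iff_injective] at hf ⊢
    exact Module.Flat.lTensor_preserves_injective_linearMap (M := L.V) f.hom.toLinearMap hf⟩
  have : Limits.PreservesColimits (tensorLeft L) := (ihom.adjunction L).leftAdjoint_preservesColimits
  exact Functor.preservesHomology_of_preservesMonos_and_cokernels _

lemma tensorLeft_preservesProj (L : Rep.{0} k G) [Module.Free k L.V] :
    (tensorLeft L).PreservesProjectiveObjects := by
  have : (Rep.ihom L).PreservesEpimorphisms := ⟨by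
    intro X Y f hf
    rw [Rep.epi_iff_surjective] at hf ⊢
    intro φ
    obtain ⟨ψ, hψ⟩ := Module.projective_lifting_property f.hom.toLinearMap
      (show L.V →ₗ[k] Y.V from φ) hf
    exact ⟨ψ, hψ⟩⟩
  have : (ihom L).PreservesEpimorphisms := this
  exact Functor.preservesProjectiveObjects_of_adjunction_of_preservesEpimorphisms (ihom.adjunction L)

noncomputable def latA {L : Rep.{0} k G} {ι : Type} [Fintype ι] (b : Module.Basis ι k L.V) (j : ι) :
    Rep.leftRegular k G ⟶ (Rep.ihom L).obj (Rep.leftRegular k G) := Rep.ofHom (latAInt L.ρ b j)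

noncomputable def latB {L : Rep.{0} k G} {ι : Type} [Fintype ι] (b : Module.Basis ι k L.V) (j : ι) :
    (Rep.ihom L).obj (Rep.leftRegular k G) ⟶ Rep.leftRegular k G := Rep.ofHom (latBInt L.ρ b j)

lemma lat_sum {L : Rep.{0} k G} {ι : Type} [Fintype ι] (b : Module.Basis ι k L.V) :
    ∑ j, latB b j ≫ latA b j = 𝟙 _ := by
  refine Rep.hom_ext (Representation.IntertwiningMap.ext (LinearMap.ext fun F => ?_))
  rw [Rep.sum_hom]
  refine Eq.trans ?_ (latLin_sum L.ρ b F)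
  rw [Representation.IntertwiningMap.toLinearMap_sum, LinearMap.sum_apply]
  rfl

lemma rep_shortExact {A B C : Rep.{0} k G} (f : A ⟶ B) (g : B ⟶ C) (hf : Function.Injective f.hom)
    (hg : Function.Surjective g.hom) (h0 : ∀ a, g.hom (f.hom a) = 0)
    (h : ∀ b, g.hom b = 0 → ∃ a, f.hom a = b) :
    ∃ w : f ≫ g = 0, (ShortComplex.mk f g w).ShortExact := by
  have w : f ≫ g = 0 :=
    Rep.hom_ext (Representation.IntertwiningMap.ext (LinearMap.ext fun a => h0 a))
  refine ⟨w, ?_⟩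
  have := (Rep.mono_iff_injective f).2 hf
  have := (Rep.epi_iff_surjective g).2 hg
  refine ShortComplex.ShortExact.mk ?_
  rw [← ShortComplex.exact_map_iff_of_faithful _ (forget₂ (Rep.{0} k G) (ModuleCat.{0} k)),
    ShortComplex.moduleCat_exact_iff]
  exact h

variable [HasExt.{0} (Rep.{0} k G)]

lemma ext_fg_lattice (L : Rep.{0} k G) [Module.Free k L.V] [Module.Finite k L.V] (n : ℕ)
    (h : AddGroup.FG (Abelian.Ext.{0} (Rep.trivial k G k) (Rep.leftRegular k G) n)) :
    AddGroup.FG (Abelian.Ext.{0} L (Rep.leftRegular k G) n) := by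
  have := tensorLeft_preservesHomology L
  have := tensorLeft_preservesProj L
  have h1 : AddGroup.FG (Abelian.Ext.{0} (Rep.trivial k G k)
      ((ihom L).obj (Rep.leftRegular k G)) n) :=
    ext_fg_retract _ _ _ (latA (Module.Free.chooseBasis k L.V)) (latB _) (lat_sum _) n h
  have h2 := ext_fg_adj.{0} (tensorLeft L) (ihom L) (ihom.adjunction L)
    (Rep.barResolution k G) (Rep.leftRegular k G) n h1
  exact ext_fg_of_iso (ρ_ L) _ _ h2

variable [IsDomain k] [IsPrincipalIdealRing k]

lemma ext_fg_finite (T : Rep.{0} k G) [Finite T.V] (n : ℕ)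
    (h : AddGroup.FG (Abelian.Ext.{0} (Rep.trivial k G k) (Rep.leftRegular k G) n))
    (h' : AddGroup.FG (Abelian.Ext.{0} (Rep.trivial k G k) (Rep.leftRegular k G) (n - 1))) :
    AddGroup.FG (Abelian.Ext.{0} T (Rep.leftRegular k G) n) := by
  let ρ : Representation k G (T.V →₀ k) :=
    { toFun g := Finsupp.lmapDomain k k (T.ρ g)
      map_one' := by ext; simp
      map_mul' x y := by ext; simp }
  let L : Rep.{0} k G := Rep.of ρ
  let p : L ⟶ T := Rep.ofHom ⟨Finsupp.linearCombination k id, by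
    intro g
    ext; simp [ρ]⟩
  let K := L.subrepresentation (LinearMap.ker p.hom.toLinearMap) (by
    intro g x hx
    have hx' : p.hom x = 0 := hx
    show p.hom (L.ρ g x) = 0
    rw [Rep.hom_comm_apply, hx', map_zero])
  let i : K ⟶ L := L.subtype _ _
  obtain ⟨w, hS⟩ := rep_shortExact i p (fun x y hxy => Subtype.ext hxy)
    (fun t => ⟨Finsupp.single t 1, by
      show Finsupp.linearCombination k id (Finsupp.single t 1) = t
      simp⟩) (fun a => a.2) (fun b hb => ⟨⟨b, hb⟩, rfl⟩)
  have : Module.Free k L.V := inferInstanceAs (Module.Free k (T.V →₀ k))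
  have : Module.Finite k L.V := inferInstanceAs (Module.Finite k (T.V →₀ k))
  have : Module.Free k K.V := inferInstanceAs (Module.Free k (LinearMap.ker p.hom.toLinearMap))
  have : Module.Finite k K.V := inferInstanceAs (Module.Finite k (LinearMap.ker p.hom.toLinearMap))
  exact ext_fg_x3 hS _ n (ext_fg_lattice K _ h') (ext_fg_lattice L _ h)

lemma ext_fg_rep (A : Rep.{0} k G) [Module.Finite k A.V] [Finite (Submodule.torsion k A.V)] (n : ℕ)
    (h : AddGroup.FG (Abelian.Ext.{0} (Rep.trivial k G k) (Rep.leftRegular k G) n))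
    (h' : AddGroup.FG (Abelian.Ext.{0} (Rep.trivial k G k) (Rep.leftRegular k G) (n - 1))) :
    AddGroup.FG (Abelian.Ext.{0} A (Rep.leftRegular k G) n) := by
  have hle : ∀ g, Submodule.torsion k A.V ≤ (Submodule.torsion k A.V).comap (A.ρ g) := by
    intro g x hx
    rw [Submodule.mem_torsion_iff] at hx
    obtain ⟨a, ha⟩ := hx
    rw [Submodule.mem_comap, Submodule.mem_torsion_iff]
    refine ⟨a, ?_⟩
    have := congrArg (A.ρ g) ha
    rw [map_zero] at this
    rw [← this]
    exact ((A.ρ g).map_smul (a : k) x).symm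
  obtain ⟨w, hS⟩ := rep_shortExact (A.subtype _ hle) (A.mkQ _ hle)
    (fun x y hxy => Subtype.ext hxy) (Submodule.mkQ_surjective _)
    (fun a => (Submodule.Quotient.mk_eq_zero _).2 a.2)
    (fun b hb => ⟨⟨b, (Submodule.Quotient.mk_eq_zero _).1 hb⟩, rfl⟩)
  have : Finite (A.subrepresentation _ hle).V := inferInstanceAs (Finite (Submodule.torsion k A.V))
  have : Module.Finite k (A.quotient _ hle).V :=
    inferInstanceAs (Module.Finite k (A.V ⧸ Submodule.torsion k A.V))
  have : Module.Free k (A.quotient _ hle).V :=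
    inferInstanceAs (Module.Free k (A.V ⧸ Submodule.torsion k A.V))
  exact ext_fg_x2 hS _ n (ext_fg_finite _ n h h') (ext_fg_lattice _ n h)

end RepPart

section Final

lemma fg_of_equiv {A B : Type*} [AddCommGroup A] [AddCommGroup B] (f : A →+ B)
    (hf : Function.Surjective f) (h : AddGroup.FG A) : AddGroup.FG B :=
  AddGroup.fg_of_surjective hf

lemma ext_fg_rep_int {G : Type} [Group G] [HasExt.{0} (Rep.{0} ℤ G)] (A : Rep.{0} ℤ G)
    (hA : AddGroup.FG A.V) (n : ℕ)
    (h : AddGroup.FG (Abelian.Ext.{0} (Rep.trivial ℤ G ℤ) (Rep.leftRegular ℤ G) n))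
    (h' : AddGroup.FG (Abelian.Ext.{0} (Rep.trivial ℤ G ℤ) (Rep.leftRegular ℤ G) (n - 1))) :
    AddGroup.FG (Abelian.Ext.{0} A (Rep.leftRegular ℤ G) n) := by
  have e : A.hV2 = AddCommGroup.toIntModule A.V := Subsingleton.elim _ _
  have h1 : @Module.Finite ℤ A.V _ _ A.hV2 := by
    rw [e]; exact Module.Finite.iff_addGroup_fg.2 hA
  have h2 : Finite (@Submodule.torsion ℤ A.V _ _ A.hV2) := by
    rw [e] at h1 ⊢
    exact Module.finite_of_fg_torsion _ (Submodule.torsion_isTorsion)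
  exact ext_fg_rep A n h h'

noncomputable def regIso (G : Type) [Group G] : Rep.leftRegular ℤ G ≅
    Rep.ofModuleMonoidAlgebra.obj (ModuleCat.of (MonoidAlgebra ℤ G) (MonoidAlgebra ℤ G)) :=
  Rep.unitIso (Rep.leftRegular ℤ G) ≪≫ Rep.ofModuleMonoidAlgebra.mapIso
    (Representation.ofMulActionSelfAsModuleEquiv (k := ℤ) (G := G)).toModuleIso

lemma groupCoh_fg {G : Type} [Group G] [HasExt.{0} (Rep.{0} ℤ G)] (n : ℕ)
    (h : AddGroup.FG (groupCohomology (Rep.ofMulAction ℤ G G) n)) :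
    AddGroup.FG (Abelian.Ext.{0} (Rep.trivial ℤ G ℤ) (Rep.leftRegular ℤ G) n) := by
  rw [← ext_fg_iff.{0}]
  have e := (groupCohomologyIsoExt (Rep.ofMulAction ℤ G G) n).toLinearEquiv
  exact fg_of_equiv e.toLinearMap.toAddMonoidHom e.surjective h

end Final

theorem stmt6 (G : Type) [Group G] (i : ℕ)
    (h1 : AddGroup.FG (groupCohomology (Rep.ofMulAction ℤ G G) i))
    (h2 : AddGroup.FG (groupCohomology (Rep.ofMulAction ℤ G G) (i - 1)))
    (A : Type) [AddCommGroup A] [Module (MonoidAlgebra ℤ G) A]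
    (hA : AddGroup.FG A) :
    AddGroup.FG (extZG G i A) := by
  have : HasExt.{0} (Rep.{0} ℤ G) := hasExt_of_enoughProjectives _
  have : HasExt.{0} (ModuleCat.{0} (MonoidAlgebra ℤ G)) := hasExt_of_enoughProjectives _
  have k1 := groupCoh_fg i h1
  have k2 := groupCoh_fg (i - 1) h2
  let M := ModuleCat.of (MonoidAlgebra ℤ G) A
  let X : Rep.{0} ℤ G := Rep.ofModuleMonoidAlgebra.obj M
  have hX : AddGroup.FG X.V := hA
  have k3 := ext_fg_rep_int X hX i k1 k2
  have k4 : AddGroup.FG (Abelian.Ext.{0} X (Rep.ofModuleMonoidAlgebra.obj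
      (ModuleCat.of (MonoidAlgebra ℤ G) (MonoidAlgebra ℤ G))) i) :=
    ext_fg_retract (ι := Unit) X _ _ (fun _ => (regIso G).hom) (fun _ => (regIso G).inv)
      (by simp) i k3
  let E := Rep.equivalenceModuleMonoidAlgebra (k := ℤ) (G := G)
  have : (Rep.toModuleMonoidAlgebra (k := ℤ) (G := G)).Additive :=
    ⟨by intros; rfl⟩
  have : (Rep.toModuleMonoidAlgebra (k := ℤ) (G := G)).PreservesProjectiveObjects :=
    Functor.preservesProjectiveObjects_of_adjunction_of_preservesEpimorphisms E.toAdjunction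
  have k5 := ext_fg_adj.{0} Rep.toModuleMonoidAlgebra Rep.ofModuleMonoidAlgebra E.toAdjunction
    (ProjectiveResolution.of X) _ i k4
  have k6 := ext_fg_of_iso (Rep.counitIso M) _ i k5
  exact (ext_fg_iff.{0} M _ i).2 k6
end

section
/- Let G be a group such that H^i(G, ZG) = 0 for all i ≤ n, and let A be a ZG-module whose underlying abelian group is finitely generated. Then Ext^i_{ZG}(A, ZG) = 0 for all i ≤ n. -/
open CategoryTheory Opposite

namespace ExtZG
open Limits

section general
universe w v u v' u'
variable {C : Type u} [Category.{v} C] [Abelian C] {D : Type u'} [Category.{v'} D] [Abelian D]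

/-- Vanishing of the degree `n` cohomology of `Hom(P, Y)`. -/
def Van {X : C} (P : ProjectiveResolution X) (Y : C) (n : ℕ) : Prop :=
  ∀ f : P.complex.X n ⟶ Y, P.complex.d (n + 1) n ≫ f = 0 →
    ∃ g : P.complex.X (n - 1) ⟶ Y, P.complex.d n (n - 1) ≫ g = f

lemma van_iff_old [EnoughProjectives C] (R : Type*) [Ring R] [Linear R C]
    {X : C} (P : ProjectiveResolution X) (Y : C) (n : ℕ) :
    Subsingleton (((Ext R C n).obj (op X)).obj Y) ↔ Van P Y n := by
  have h1 : Subsingleton (((Ext R C n).obj (op X)).obj Y) ↔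
      IsZero ((P.complex.linearYonedaObj R Y).homology n) := by
    rw [← (P.isoExt (R := R) n Y).isZero_iff]
    exact ⟨fun h => ModuleCat.isZero_of_subsingleton _, fun h => ModuleCat.subsingleton_of_isZero h⟩
  rw [h1, ← HomologicalComplex.exactAt_iff_isZero_homology,
    HomologicalComplex.exactAt_iff' _ (n - 1) n (n + 1) (by cases n <;> simp) (by simp),
    ShortComplex.moduleCat_exact_iff]
  rfl

lemma van_iff_ext [HasExt.{w} C] {X : C} (P : ProjectiveResolution X) (Y : C) (n : ℕ) :
    Subsingleton (Abelian.Ext X Y n) ↔ Van P Y n := by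
  cases n with
  | zero =>
    have hd : P.complex.d 0 (0 - 1) = 0 := P.complex.shape _ _ (by simp)
    rw [Abelian.Ext.homEquiv₀.subsingleton_congr]
    let π₀ : P.complex.X 0 ⟶ X := P.π.f 0
    have hπ : P.complex.d 1 0 ≫ π₀ = 0 := P.complex_d_comp_π_f_zero
    constructor
    · intro h f hf
      refine ⟨0, ?_⟩
      let e : X ⟶ Y := P.isColimitCokernelCofork.desc (CokernelCofork.ofπ f hf)
      have he : π₀ ≫ e = f := P.isColimitCokernelCofork.fac _ WalkingParallelPair.one
      rw [← he, Subsingleton.elim e 0, comp_zero, comp_zero]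
    · intro h
      refine subsingleton_of_forall_eq 0 fun e => ?_
      obtain ⟨g, hg⟩ := h (π₀ ≫ e) (by
        change P.complex.d 1 0 ≫ π₀ ≫ e = 0
        rw [← Category.assoc, hπ, zero_comp])
      rw [hd, zero_comp] at hg
      refine Cofork.IsColimit.hom_ext P.isColimitCokernelCofork ?_
      change π₀ ≫ e = π₀ ≫ 0
      rw [← hg, comp_zero]
  | succ n =>
    constructor
    · intro h f hf
      exact (P.extMk_eq_zero_iff f _ rfl hf n rfl).1 (Subsingleton.elim _ _)
    · intro h
      refine subsingleton_of_forall_eq 0 fun e => ?_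
      obtain ⟨f, hf, rfl⟩ := P.extMk_surjective e _ rfl
      exact (P.extMk_eq_zero_iff f _ rfl hf n rfl).2 (h f hf)

lemma old_iff_ext [HasExt.{w} C] [EnoughProjectives C] (R : Type*) [Ring R] [Linear R C]
    (X Y : C) (n : ℕ) :
    Subsingleton (((Ext R C n).obj (op X)).obj Y) ↔ Subsingleton (Abelian.Ext X Y n) :=
  (van_iff_old R (projectiveResolution X) Y n).trans (van_iff_ext _ Y n).symm

lemma ext_adj [HasExt.{w} C] [HasExt.{w} D] [EnoughProjectives C] {F : C ⥤ D} {G : D ⥤ C}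
    (adj : F ⊣ G) [F.Additive] [F.PreservesHomology] [G.PreservesEpimorphisms]
    (X : C) (Y : D) (n : ℕ) (h : Subsingleton (Abelian.Ext X (G.obj Y) n)) :
    Subsingleton (Abelian.Ext (F.obj X) Y n) := by
  have := F.preservesProjectiveObjects_of_adjunction_of_preservesEpimorphisms adj
  let P := projectiveResolution X
  rw [van_iff_ext P] at h
  rw [van_iff_ext (F.mapProjectiveResolution P)]
  intro f hf
  change F.obj (P.complex.X n) ⟶ Y at f
  change F.map (P.complex.d (n + 1) n) ≫ f = 0 at hf
  obtain ⟨g, hg⟩ := h (adj.homEquiv _ _ f) (by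
    rw [← adj.homEquiv_naturality_left, hf]
    have := adj.right_adjoint_additive
    simp [Adjunction.homEquiv_unit])
  refine ⟨(adj.homEquiv _ _).symm g, ?_⟩
  change F.map (P.complex.d n (n - 1)) ≫ _ = f
  rw [← adj.homEquiv_naturality_left_symm, hg]
  simp

lemma ext_of_iso [HasExt.{w} C] {X X' Y Y' : C} (e : X ≅ X') (e' : Y ≅ Y') (n : ℕ)
    (h : Subsingleton (Abelian.Ext X Y n)) : Subsingleton (Abelian.Ext X' Y' n) := by
  refine subsingleton_of_forall_eq 0 fun x => ?_
  have h0 : ((Abelian.Ext.mk₀ e.hom).comp x (zero_add n)).comp (Abelian.Ext.mk₀ e'.inv)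
    (add_zero n) = 0 := Subsingleton.elim _ _
  have h1 : (Abelian.Ext.mk₀ e.inv).comp (((Abelian.Ext.mk₀ e.hom).comp x (zero_add n)).comp
      (Abelian.Ext.mk₀ e'.inv) (add_zero n)) (zero_add n) = 0 := by rw [h0]; simp
  have h2 := congrArg (fun z => z.comp (Abelian.Ext.mk₀ e'.hom) (add_zero n)) h1
  simpa using h2

/-- Retract argument: if `𝟙 N = ∑ p j ≫ i j` with the `p j` landing in `Y`. -/
lemma ext_of_sum [HasExt.{w} C] {X N Y : C} {ι : Type*} [Fintype ι] (p : ι → (N ⟶ Y))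
    (i : ι → (Y ⟶ N)) (hpi : ∑ j, p j ≫ i j = 𝟙 N) (n : ℕ)
    (h : Subsingleton (Abelian.Ext X Y n)) : Subsingleton (Abelian.Ext X N n) := by
  refine subsingleton_of_forall_eq 0 fun x => ?_
  have : x = x.comp (Abelian.Ext.mk₀ (𝟙 N)) (add_zero n) := by simp
  rw [this, ← hpi, Abelian.Ext.mk₀_sum, Abelian.Ext.comp_sum]
  refine Finset.sum_eq_zero fun j _ => ?_
  rw [← Abelian.Ext.mk₀_comp_mk₀, ← Abelian.Ext.comp_assoc_of_third_deg_zero,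
    Subsingleton.elim (x.comp (Abelian.Ext.mk₀ (p j)) (add_zero n)) 0]
  simp

lemma ext_mid [HasExt.{w} C] {S : ShortComplex C} (hS : S.ShortExact) (Y : C) (n : ℕ)
    (h1 : Subsingleton (Abelian.Ext S.X₁ Y n)) (h3 : Subsingleton (Abelian.Ext S.X₃ Y n)) :
    Subsingleton (Abelian.Ext S.X₂ Y n) := by
  refine subsingleton_of_forall_eq 0 fun x => ?_
  obtain ⟨y, rfl⟩ := Abelian.Ext.contravariant_sequence_exact₂ hS Y x (Subsingleton.elim _ _)
  rw [Subsingleton.elim y 0]; simp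

lemma ext_right [HasExt.{w} C] {S : ShortComplex C} (hS : S.ShortExact) (Y : C) (n : ℕ)
    (h1 : ∀ i ≤ n, Subsingleton (Abelian.Ext S.X₁ Y i))
    (h2 : ∀ i ≤ n, Subsingleton (Abelian.Ext S.X₂ Y i)) :
    ∀ i ≤ n, Subsingleton (Abelian.Ext S.X₃ Y i) := by
  intro i hi
  refine subsingleton_of_forall_eq 0 fun x => ?_
  have := h2 i hi
  cases i with
  | zero =>
    have := hS.epi_g
    exact Abelian.Ext.precomp_mk₀_injective_of_epi Y S.g (Subsingleton.elim _ _)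
  | succ i =>
    have := h1 i (by omega)
    obtain ⟨y, rfl⟩ := Abelian.Ext.contravariant_sequence_exact₃ hS Y x (Subsingleton.elim _ _)
      (add_comm 1 i)
    rw [Subsingleton.elim y 0]; simp

end general
end ExtZG
namespace ExtZG
open Limits MonoidalCategory

section rep
variable {k : Type} [CommRing k] {G : Type} [Group G]

instance hasExtRep : HasExt.{0} (Rep.{0} k G) := hasExt_of_enoughProjectives _

instance (A : Rep.{0} k G) : (tensorLeft A).Additive where

lemma tensorLeft_preservesHomology (A : Rep.{0} k G) [Module.Free k A.V] :
    (tensorLeft A).PreservesHomology := by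
  have hm : (tensorLeft A).PreservesMonomorphisms := by
    refine ⟨fun {X Y} f hf => ?_⟩
    rw [Rep.mono_iff_injective] at hf ⊢
    exact Module.Flat.lTensor_preserves_injective_linearMap (M := A.V) f.hom.toLinearMap hf
  have : (tensorLeft A).IsLeftAdjoint := (ihom.adjunction A).isLeftAdjoint
  exact Functor.preservesHomology_of_preservesMonos_and_cokernels _

lemma ihom_preservesEpi (A : Rep.{0} k G) [Module.Free k A.V] :
    (ihom A).PreservesEpimorphisms := by
  refine ⟨fun {X Y} f hf => ?_⟩
  rw [Rep.epi_iff_surjective] at hf ⊢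
  intro φ
  obtain ⟨ψ, hψ⟩ := Module.projective_lifting_property f.hom.toLinearMap
    (show A.V →ₗ[k] Y.V from φ) hf
  exact ⟨ψ, hψ⟩

/-- coordinate projection `Hom(A, kG) → kG`, on underlying modules -/
noncomputable def projLin (A : Rep.{0} k G) {ι : Type} [Fintype ι] (b : Module.Basis ι k A.V)
    (j : ι) : (A.V →ₗ[k] MonoidAlgebra k G) →ₗ[k] MonoidAlgebra k G :=
  ∑ l, (MonoidAlgebra.coeffLinearEquiv k).symm.toLinearMap ∘ₗ
    (Finsupp.lsum k fun g => (b.coord l (A.ρ g (b j))) • Finsupp.lsingle g) ∘ₗ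
    (MonoidAlgebra.coeffLinearEquiv k).toLinearMap ∘ₗ LinearMap.applyₗ (b l)

lemma lsum_aux (c : G → k) (x : G →₀ k) (g : G) :
    (Finsupp.lsum k fun g => (c g) • Finsupp.lsingle (R := k) (M := k) g) x g = c g * x g := by
  classical
  induction x using Finsupp.induction_linear with
  | zero => simp
  | add x y hx hy => simp only [map_add, Finsupp.add_apply, hx, hy, mul_add]
  | single a r =>
    simp only [Finsupp.lsum_single, LinearMap.smul_apply, Finsupp.lsingle_apply, Finsupp.smul_apply,
      Finsupp.single_apply, smul_eq_mul]
    split_ifs with h <;> simp [h]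

lemma projLin_coeff (A : Rep.{0} k G) {ι : Type} [Fintype ι] (b : Module.Basis ι k A.V)
    (j : ι) (φ : A.V →ₗ[k] MonoidAlgebra k G) (g : G) :
    (projLin A b j φ).coeff g = (φ (A.ρ g (b j))).coeff g := by
  conv_rhs => rw [← b.sum_repr (A.ρ g (b j))]
  rw [projLin, LinearMap.sum_apply, map_sum, MonoidAlgebra.coeff_sum, MonoidAlgebra.coeff_sum,
    Finset.sum_apply', Finset.sum_apply']
  refine Finset.sum_congr rfl fun l _ => ?_
  rw [map_smul, MonoidAlgebra.coeff_smul, Finsupp.smul_apply, smul_eq_mul]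
  exact lsum_aux (fun g => b.coord l (A.ρ g (b j))) (φ (b l)).coeff g

noncomputable def proj (A : Rep.{0} k G) {ι : Type} [Fintype ι] (b : Module.Basis ι k A.V)
    (j : ι) : (ihom A).obj (Rep.ofMulAction k G G) ⟶ Rep.ofMulAction k G G :=
  Rep.ofHom (ρ := Representation.linHom A.ρ (Representation.ofMulAction k G G))
    (LinearMap.intertwiningMap_of_isIntertwiningMap _ _ (projLin A b j) (by
    intro h φ
    ext g
    rw [projLin_coeff, Representation.coeff_ofMulAction, projLin_coeff]
    simp))

noncomputable def incl (A : Rep.{0} k G) {ι : Type} [Fintype ι] (b : Module.Basis ι k A.V)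
    (j : ι) : Rep.ofMulAction k G G ⟶ (ihom A).obj (Rep.ofMulAction k G G) :=
  Rep.leftRegularHom ((Rep.ihom A).obj (Rep.ofMulAction k G G))
    ((LinearMap.toSpanSingleton k (MonoidAlgebra k G) 1) ∘ₗ b.coord j : A.V →ₗ[k] _)

lemma incl_coeff (A : Rep.{0} k G) {ι : Type} [Fintype ι] (b : Module.Basis ι k A.V)
    (j : ι) (x : MonoidAlgebra k G) (a : A.V) (g : G) :
    ((show A.V →ₗ[k] MonoidAlgebra k G from (incl A b j).hom x) a).coeff g =
      x.coeff g * b.coord j (A.ρ g⁻¹ a) := by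
  classical
  induction x using MonoidAlgebra.induction_linear with
  | zero => 
    rw [map_zero]
    simp
    rfl
  | add x y hx hy =>
    rw [map_add, MonoidAlgebra.coeff_add, Finsupp.add_apply, add_mul, ← hx, ← hy]
    rfl
  | single h r =>
    have : (incl A b j).hom (MonoidAlgebra.single h r) = _ :=
      Rep.leftRegularHom_hom_single (A := (Rep.ihom A).obj (Rep.ofMulAction k G G)) h _ r
    rw [this]
    change (r • Representation.ofMulAction k G G h (b.coord j (A.ρ h⁻¹ a) • (1 : MonoidAlgebra k G))).coeff g = _
    rw [MonoidAlgebra.coeff_smul, Finsupp.smul_apply, Representation.coeff_ofMulAction,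
      MonoidAlgebra.coeff_smul, Finsupp.smul_apply, MonoidAlgebra.one_def,
      MonoidAlgebra.coeff_single, MonoidAlgebra.coeff_single, Finsupp.single_apply,
      Finsupp.single_apply]
    by_cases hgh : h = g
    · subst hgh; simp
    · have : ¬ (1 = h⁻¹ * g) := fun h' => hgh (by rw [eq_inv_mul_iff_mul_eq] at h'; simpa using h')
      simp [hgh, this]

lemma proj_incl (A : Rep.{0} k G) {ι : Type} [Fintype ι] (b : Module.Basis ι k A.V) :
    ∑ j, proj A b j ≫ incl A b j = 𝟙 ((ihom A).obj (Rep.ofMulAction k G G)) := by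
  apply Rep.hom_ext
  apply Representation.IntertwiningMap.ext
  ext φ : 1
  change A.V →ₗ[k] MonoidAlgebra k G at φ
  refine LinearMap.ext (M := A.V) (M₃ := MonoidAlgebra k G) fun a => ?_
  ext g
  let ev : ((ihom A).obj (Rep.ofMulAction k G G) ⟶ (ihom A).obj (Rep.ofMulAction k G G)) →+ k :=
    AddMonoidHom.mk' (fun f =>
      ((show A.V →ₗ[k] MonoidAlgebra k G from f.hom φ) a).coeff g) (fun f f' => rfl)
  have key : ∑ j, ((show A.V →ₗ[k] MonoidAlgebra k G from (incl A b j).hom (projLin A b j φ)) a).coeff g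
      = (φ a).coeff g := by
    have ha : a = ∑ j, b.coord j (A.ρ g⁻¹ a) • A.ρ g (b j) := by
      have := congrArg (A.ρ g) (b.sum_repr (A.ρ g⁻¹ a))
      rw [map_sum, Representation.self_inv_apply] at this
      simp only [map_smul] at this
      exact this.symm
    conv_rhs => rw [ha, map_sum, MonoidAlgebra.coeff_sum, Finset.sum_apply']
    refine Finset.sum_congr rfl fun j _ => ?_
    rw [map_smul, MonoidAlgebra.coeff_smul, Finsupp.smul_apply, smul_eq_mul, mul_comm]
    exact (incl_coeff ..).trans (by rw [projLin_coeff])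
  exact (map_sum ev _ _).trans key

lemma free_case (A : Rep.{0} k G) [Module.Free k A.V] [Module.Finite k A.V] (n : ℕ)
    (h : Subsingleton (Abelian.Ext (Rep.trivial k G k) (Rep.ofMulAction k G G) n)) :
    Subsingleton (Abelian.Ext A (Rep.ofMulAction k G G) n) := by
  have := tensorLeft_preservesHomology A
  have := ihom_preservesEpi A
  cases subsingleton_or_nontrivial k
  · have : Subsingleton A.V := Module.subsingleton k _
    have hz : IsZero A := (Rep.isZero_iff _ _ A).2 this
    refine subsingleton_of_forall_eq 0 fun x => ?_
    rw [← Abelian.Ext.mk₀_id_comp x, hz.eq_of_src (𝟙 A) 0]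
    simp
  have h1 := ext_of_sum _ _ (proj_incl A (Module.Free.chooseBasis k A.V)) n h
  have h2 := ext_adj (ihom.adjunction A) (Rep.trivial k G k) _ n h1
  exact ext_of_iso (ρ_ A) (Iso.refl _) n h2

end rep
end ExtZG

namespace ExtZG
open Limits

section devissage
variable {k : Type} [CommRing k] {G : Type} [Group G]

lemma shortExact_rep (S : ShortComplex (Rep.{0} k G)) (hf : Function.Injective S.f.hom)
    (hg : Function.Surjective S.g.hom)
    (he : ∀ x : S.X₂.V, S.g.hom x = 0 → ∃ y : S.X₁.V, S.f.hom y = x) : S.ShortExact := by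
  have hm : Mono S.f := (Rep.mono_iff_injective _).2 hf
  have he' : Epi S.g := (Rep.epi_iff_surjective _).2 hg
  refine ShortComplex.ShortExact.mk' ?_ hm he'
  have h2 : (S.map (forget₂ (Rep.{0} k G) (ModuleCat.{0} k))).Exact := by
    rw [ShortComplex.moduleCat_exact_iff]
    exact he
  exact (ShortComplex.exact_map_iff_of_faithful S (forget₂ (Rep.{0} k G) (ModuleCat.{0} k))).1 h2

/-- permutation representation on the free module on the underlying set of `T` -/
noncomputable def permRep (T : Rep.{0} k G) : Representation k G (T.V →₀ k) where
  toFun g := Finsupp.lmapDomain k k (fun t => T.ρ g t)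
  map_one' := by
    ext t : 2
    simp
  map_mul' g h := by
    ext t : 2
    simp [Finsupp.mapDomain_single]

noncomputable def permMap (T : Rep.{0} k G) : Rep.of (permRep T) ⟶ T :=
  Rep.ofHom (σ := T.ρ) (LinearMap.intertwiningMap_of_isIntertwiningMap _ _
    (Finsupp.linearCombination k (fun t : T.V => t)) (by
      intro g x
      induction x using Finsupp.induction_linear with
      | zero => simp
      | add x y hx hy => simp only [map_add, hx, hy]
      | single a r => simp [permRep, Finsupp.mapDomain_single]))

lemma permMap_apply (T : Rep.{0} k G) (x : T.V →₀ k) :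
    (permMap T).hom x = Finsupp.linearCombination k (fun t : T.V => t) x := rfl

lemma finite_case [IsDomain k] [IsPrincipalIdealRing k] (T : Rep.{0} k G) [Finite T.V] (n : ℕ)
    (h : ∀ i ≤ n, Subsingleton
      (Abelian.Ext (Rep.trivial k G k) (Rep.ofMulAction k G G) i)) :
    ∀ i ≤ n, Subsingleton (Abelian.Ext T (Rep.ofMulAction k G G) i) := by
  let F : Rep.{0} k G := Rep.of (permRep T)
  let W : Submodule k F.V := LinearMap.ker (permMap T).hom.toLinearMap
  have hW : ∀ g, W ≤ W.comap (F.ρ g) := by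
    intro g x hx
    change (permMap T).hom (F.ρ g x) = 0
    change (permMap T).hom x = 0 at hx
    rw [Rep.hom_comm_apply, hx, map_zero]
  let S : ShortComplex (Rep.{0} k G) := ShortComplex.mk (F.subtype W hW) (permMap T) (by
    ext x
    exact x.2)
  have hS : S.ShortExact := by
    refine shortExact_rep S ?_ ?_ ?_
    · exact Subtype.val_injective
    · intro t
      refine ⟨Finsupp.single t (1 : k), ?_⟩
      change (permMap T).hom _ = t
      rw [permMap_apply]
      simp
    · intro x hx
      exact ⟨⟨x, hx⟩, rfl⟩
  have i1 : Module.Free k F.V := inferInstanceAs (Module.Free k (T.V →₀ k))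
  have i2 : Module.Finite k F.V := inferInstanceAs (Module.Finite k (T.V →₀ k))
  have i3 : Module.Free k S.X₁.V :=
    Module.Free.of_basis (Submodule.basisOfPid (Module.Free.chooseBasis k F.V) W).2
  have i4 : Module.Finite k S.X₁.V := inferInstanceAs (Module.Finite k W)
  exact ext_right hS _ n (fun i hi => free_case _ i (h i hi))
    (fun i hi => free_case F i (h i hi))

lemma fg_case [IsDomain k] [IsPrincipalIdealRing k]
    (hfin : ∀ (M : Type) [AddCommGroup M] [Module k M] [Module.Finite k M],
      Module.IsTorsion k M → Finite M) (X : Rep.{0} k G) [Module.Finite k X.V] (n : ℕ)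
    (h : ∀ i ≤ n, Subsingleton
      (Abelian.Ext (Rep.trivial k G k) (Rep.ofMulAction k G G) i)) :
    ∀ i ≤ n, Subsingleton (Abelian.Ext X (Rep.ofMulAction k G G) i) := by
  let W : Submodule k X.V := Submodule.torsion k X.V
  have hW : ∀ g, W ≤ W.comap (X.ρ g) := by
    intro g x hx
    obtain ⟨a, ha⟩ := (Submodule.mem_torsion_iff x).1 hx
    refine (Submodule.mem_torsion_iff _).2 ⟨a, ?_⟩
    change (a : k) • X.ρ g x = 0
    change (a : k) • x = 0 at ha
    rw [← map_smul, ha, map_zero]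
  let S : ShortComplex (Rep.{0} k G) := ShortComplex.mk (X.subtype W hW) (X.mkQ W hW) (by
    ext x
    exact (Submodule.Quotient.mk_eq_zero W).2 x.2)
  have hS : S.ShortExact := by
    refine shortExact_rep S ?_ ?_ ?_
    · exact Subtype.val_injective
    · exact Submodule.mkQ_surjective W
    · intro x hx
      exact ⟨⟨x, (Submodule.Quotient.mk_eq_zero W).1 hx⟩, rfl⟩
  have i1 : Finite S.X₁.V := hfin W Submodule.torsion_isTorsion
  have i2 : Module.Finite k S.X₃.V := inferInstanceAs (Module.Finite k (X.V ⧸ W))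
  have i0 : Module.IsTorsionFree k (X.V ⧸ W) := Submodule.QuotientTorsion.instIsTorsionFree
  have i3 : Module.Free k S.X₃.V := inferInstanceAs (Module.Free k (X.V ⧸ W))
  intro i hi
  exact ext_mid hS _ i (finite_case S.X₁ n h i hi) (free_case S.X₃ i (h i hi))

end devissage

section final
variable {G : Type} [Group G]

lemma hyp_translate (i : ℕ) (h : Subsingleton (groupCohomology (Rep.ofMulAction ℤ G G) i)) :
    Subsingleton (Abelian.Ext (Rep.trivial ℤ G ℤ) (Rep.ofMulAction ℤ G G) i) := by
  rw [← old_iff_ext ℤ]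
  exact ((groupCohomologyIsoExt (Rep.ofMulAction ℤ G G)
    i).toLinearEquiv.symm.toEquiv.subsingleton)

noncomputable def regIso : Rep.ofModuleMonoidAlgebra.obj
    (ModuleCat.of (MonoidAlgebra ℤ G) (MonoidAlgebra ℤ G)) ≅ Rep.ofMulAction ℤ G G :=
  Rep.ofModuleMonoidAlgebra.mapIso
    (LinearEquiv.toModuleIso (Representation.ofMulActionSelfAsModuleEquiv (k := ℤ) (G := G))).symm ≪≫
    (Rep.equivalenceModuleMonoidAlgebra.unitIso.app (Rep.ofMulAction ℤ G G)).symm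

theorem main (n : ℕ)
    (hG : ∀ i ≤ n, Subsingleton (groupCohomology (Rep.ofMulAction ℤ G G) i))
    (A : Type) [AddCommGroup A] [Module (MonoidAlgebra ℤ G) A]
    (hA : AddGroup.FG A) (i : ℕ) (hi : i ≤ n) :
    Subsingleton (((Ext ℤ (ModuleCat (MonoidAlgebra ℤ G)) i).obj
    (op (ModuleCat.of (MonoidAlgebra ℤ G) A))).obj
    (ModuleCat.of (MonoidAlgebra ℤ G) (MonoidAlgebra ℤ G))) := by
  rw [old_iff_ext]
  let X : Rep.{0} ℤ G := Rep.ofModuleMonoidAlgebra.obj (ModuleCat.of (MonoidAlgebra ℤ G) A)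
  have hf : @Module.Finite ℤ X.V _ _ X.hV2 := by
    have : @Module.Finite ℤ A _ _ (AddCommGroup.toIntModule A) := Module.Finite.iff_addGroup_fg.2 hA
    have h2 : @Module.Finite ℤ X.V _ _ (AddCommGroup.toIntModule X.V) := this
    have e : X.hV2 = AddCommGroup.toIntModule X.V := Subsingleton.elim _ _
    rw [e]
    exact h2
  have h1 := @fg_case ℤ _ G _ _ _ (fun M _ _ _ hM => Module.finite_of_fg_torsion M hM) X hf n
    (fun i hi => hyp_translate i (hG i hi)) i hi
  have h2 := ext_of_iso (Iso.refl X) (regIso (G := G)).symm i h1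
  have : (Rep.equivalenceModuleMonoidAlgebra (k := ℤ) (G := G)).functor.Additive := ⟨fun {_ _ _ _} => rfl⟩
  have h3 := ext_adj (Rep.equivalenceModuleMonoidAlgebra (k := ℤ) (G := G)).toAdjunction X _ i h2
  exact ext_of_iso (Rep.equivalenceModuleMonoidAlgebra.counitIso.app _) (Iso.refl _) i h3

end final
end ExtZG

/-- If `H^i(G, ℤG) = 0` for all `i ≤ n` and `A` is a `ℤG`-module that is finitely generated
as an abelian group, then `Ext^i_{ℤG}(A, ℤG) = 0` for all `i ≤ n`. -/
theorem stmt7 (G : Type) [Group G] (n : ℕ)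
    (hG : ∀ i ≤ n, Subsingleton (groupCohomology (Rep.ofMulAction ℤ G G) i))
    (A : Type) [AddCommGroup A] [Module (MonoidAlgebra ℤ G) A]
    (hA : AddGroup.FG A) :
    ∀ i ≤ n, Subsingleton (extZG G i A) :=
  fun i hi => ExtZG.main n hG A hA i hi
end

section
/- Let G be a group with a finite-index subgroup H, and let A be a ZG-module on which H acts trivially and whose underlying abelian group is finite. Then for all i there is an isomorphism Ext^i_{ZH}(A, ZH) ≅ Ext^i_{ZG}(A, ZG). -/
open CategoryTheory Opposite

/-- `Ext^i_{ℤG}(A, ℤG)` as an abelian group, where `ℤG = MonoidAlgebra ℤ G` acts on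
itself by left multiplication. -/
noncomputable def extRG (G : Type) [Group G] (i : ℕ)
    (A : Type) [AddCommGroup A] [Module (MonoidAlgebra ℤ G) A] : ModuleCat ℤ :=
  ((Ext ℤ (ModuleCat (MonoidAlgebra ℤ G)) i).obj
    (op (ModuleCat.of (MonoidAlgebra ℤ G) A))).obj
    (ModuleCat.of (MonoidAlgebra ℤ G) (MonoidAlgebra ℤ G))


namespace Shap
variable {G : Type} [Group G] (H : Subgroup G)

noncomputable abbrev inc : MonoidAlgebra ℤ H →+* MonoidAlgebra ℤ G :=
  MonoidAlgebra.mapDomainRingHom ℤ H.subtype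

lemma inc_single (h : H) (n : ℤ) :
    inc H (MonoidAlgebra.single h n) = MonoidAlgebra.single (h : G) n := by
  simp [inc]

/-- additivity reduces `ℤH`-linearity to group elements. -/
lemma smul_of_single {K : Type} [Group K] {X Y : Type} [AddCommGroup X] [AddCommGroup Y]
    [Module (MonoidAlgebra ℤ K) X] [Module (MonoidAlgebra ℤ K) Y] (φ : X →+ Y)
    (h : ∀ (k : K) (x : X), φ (MonoidAlgebra.single k (1 : ℤ) • x) =
      MonoidAlgebra.single k (1 : ℤ) • φ x) (r : MonoidAlgebra ℤ K) (x : X) :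
    φ (r • x) = r • φ x := by
  induction r using MonoidAlgebra.induction_linear with
  | zero => simp
  | add a b ha hb => simp only [add_smul, map_add, ha, hb]
  | single g n =>
    have : (MonoidAlgebra.single g n : MonoidAlgebra ℤ K) = n • MonoidAlgebra.single g (1 : ℤ) := by
      simp
    rw [this, smul_assoc, smul_assoc, map_zsmul, h]

lemma exists_lift {M N : Type} [AddCommGroup M] [AddCommGroup N]
    [Module (MonoidAlgebra ℤ H) M] [Module (MonoidAlgebra ℤ H) N]
    (p : M →ₗ[MonoidAlgebra ℤ H] N) (hp : Function.Surjective p)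
    (φ : MonoidAlgebra ℤ G →+ N) (hφ : ∀ r x, φ (inc H r * x) = r • φ x) :
    ∃ ψ : MonoidAlgebra ℤ G →+ M, (∀ r x, ψ (inc H r * x) = r • ψ x) ∧ ∀ x, p (ψ x) = φ x := by
  let t : G → G := fun g => (Quotient.mk (QuotientGroup.rightRel H) g).out
  have ht : ∀ g, g * (t g)⁻¹ ∈ H := fun g => by
    have := Quotient.exact (Quotient.out_eq (Quotient.mk (QuotientGroup.rightRel H) g))
    exact QuotientGroup.rightRel_apply.1 this
  have ht' : ∀ (h : H) g, t (h * g) = t g := fun h g => by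
    have : Quotient.mk (QuotientGroup.rightRel H) (h * g) = Quotient.mk _ g :=
      Quotient.sound (QuotientGroup.rightRel_apply.2 (by simp))
    simp only [t, this]
  choose m hm using fun g : G => hp (φ (MonoidAlgebra.single g 1))
  let v : G → M := fun g => MonoidAlgebra.single (⟨_, ht g⟩ : H) (1 : ℤ) • m (t g)
  let ψ : MonoidAlgebra ℤ G →+ M :=
    (Finsupp.liftAddHom fun g => (zmultiplesHom M (v g))).comp
      (MonoidAlgebra.coeffAddEquiv).toAddMonoidHom
  have hψ : ∀ g n, ψ (MonoidAlgebra.single g n) = n • v g := fun g n => by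
    simp [ψ]
  let _ : Module (MonoidAlgebra ℤ H) (MonoidAlgebra ℤ G) := Module.compHom _ (inc H)
  refine ⟨ψ, fun r x => smul_of_single ψ (fun k x => ?_) r x, fun x => ?_⟩
  · change ψ (inc H _ * x) = _
    rw [inc_single]
    induction x using MonoidAlgebra.induction_linear with
    | zero => simp
    | add a b ha hb => simp only [mul_add, smul_add, map_add, ha, hb]
    | single g n =>
      rw [MonoidAlgebra.single_mul_single, one_mul, hψ, hψ,
        smul_comm (MonoidAlgebra.single k (1 : ℤ)) n (v g)]
      congr 1
      simp only [v, smul_smul, MonoidAlgebra.single_mul_single, ht']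
      rw [one_mul]
      congr 2
      ext; simp [mul_assoc]
  · induction x using MonoidAlgebra.induction_linear with
    | zero => simp
    | add a b ha hb => simp only [map_add, ha, hb]
    | single g n =>
      rw [hψ, map_zsmul]
      simp only [v, map_smul, hm]
      rw [← hφ, inc_single, ← map_zsmul]
      simp

instance : (ModuleCat.coextendScalars.{0, 0, 0} (inc H)).PreservesEpimorphisms where
  preserves {M N} p hp := by
    rw [ModuleCat.epi_iff_surjective] at hp ⊢
    intro φ
    let φ' := ModuleCat.CoextendScalars.equiv _ _ φ
    obtain ⟨ψ, h1, h2⟩ := exists_lift H p.hom hp φ'.toAddMonoidHom (fun r x => φ'.map_smul r x)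
    refine ⟨(ModuleCat.CoextendScalars.equiv _ _).symm
      { toFun := ψ, map_add' := ψ.map_add, map_smul' := h1 }, ?_⟩
    apply ModuleCat.CoextendScalars.ext
    exact LinearMap.ext h2

instance : (ModuleCat.restrictScalars.{0, 0, 0} (inc H)).PreservesProjectiveObjects :=
  Functor.preservesProjectiveObjects_of_adjunction_of_preservesEpimorphisms
    (ModuleCat.restrictCoextendScalarsAdj (inc H))

/-- restriction of coefficients -/
noncomputable def tau : MonoidAlgebra ℤ G →+ MonoidAlgebra ℤ H :=
  (MonoidAlgebra.coeffAddEquiv.symm.toAddMonoidHom).comp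
    ((Finsupp.comapDomain.addMonoidHom (Subtype.val_injective (p := (· ∈ H)))).comp
      MonoidAlgebra.coeffAddEquiv.toAddMonoidHom)

lemma tau_coeff (x : MonoidAlgebra ℤ G) (h : H) : (tau H x).coeff h = x.coeff h := rfl

lemma coeff_single_smul {K : Type} [Group K] (k : K) (x : MonoidAlgebra ℤ K) (g : K) :
    (MonoidAlgebra.single k (1:ℤ) * x).coeff g = x.coeff (k⁻¹ * g) := by
  simp

/-- composition with tau -/
noncomputable def comp (M : ModuleCat.{0} (MonoidAlgebra ℤ G)) :
    (M ⟶ ModuleCat.of _ (MonoidAlgebra ℤ G)) →+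
    ((ModuleCat.restrictScalars (inc H)).obj M ⟶ ModuleCat.of _ (MonoidAlgebra ℤ H)) where
  toFun ψ := ModuleCat.ofHom (X := (ModuleCat.restrictScalars (inc H)).obj M)
    { toFun := fun m => tau H (ψ.hom m)
      map_add' := fun a b => by
        erw [map_add, map_add]
      map_smul' := fun r (m : M) => smul_of_single 
        (X := (ModuleCat.restrictScalars (inc H)).obj M) (Y := MonoidAlgebra ℤ H)
        ((tau H).comp ψ.hom.toAddMonoidHom) (fun k x => by
          change tau H (ψ.hom (inc H _ • (show M from x))) = _ * tau H (ψ.hom x)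
          rw [map_smul, inc_single, smul_eq_mul]
          ext g
          rw [tau_coeff, coeff_single_smul, coeff_single_smul, tau_coeff]
          rfl) r m }
  map_zero' := by ext m; rfl
  map_add' a b := by ext m; rfl

lemma comp_apply (M : ModuleCat.{0} (MonoidAlgebra ℤ G))
    (ψ : M ⟶ ModuleCat.of _ (MonoidAlgebra ℤ G)) (m : M) :
    (comp H M ψ).hom m = tau H (ψ.hom m) := rfl

lemma comp_injective (M : ModuleCat.{0} (MonoidAlgebra ℤ G)) :
    Function.Injective (comp H M) := by
  rw [injective_iff_map_eq_zero]
  intro ψ hψ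
  ext m : 2
  apply MonoidAlgebra.coeff_injective
  ext g
  have h1 : tau H (ψ.hom (MonoidAlgebra.single g⁻¹ (1:ℤ) • m)) = 0 := by
    rw [← comp_apply, hψ]; rfl
  have h2 := tau_coeff H (ψ.hom (MonoidAlgebra.single g⁻¹ (1:ℤ) • m)) 1
  rw [h1, map_smul, smul_eq_mul] at h2
  erw [coeff_single_smul] at h2
  simpa using h2.symm

lemma comp_surjective [H.FiniteIndex] (M : ModuleCat.{0} (MonoidAlgebra ℤ G)) :
    Function.Surjective (comp H M) := by
  intro φ
  let φ' : M →+ MonoidAlgebra ℤ H := φ.hom.toAddMonoidHom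
  have hφ' : ∀ (h : H) (m : M), φ' (MonoidAlgebra.single (h : G) (1:ℤ) • m) =
      MonoidAlgebra.single h (1 : ℤ) * φ' m := fun h m => by
    rw [← inc_single]
    exact φ.hom.map_smul (MonoidAlgebra.single h (1:ℤ)) m
  let F : M → G → ℤ := fun m g => (φ' (MonoidAlgebra.single g⁻¹ (1:ℤ) • m)).coeff 1
  have hF : ∀ m (g : G) (h : H), F m (g * h) =
      (φ' (MonoidAlgebra.single g⁻¹ (1:ℤ) • m)).coeff h := fun m g h => by
    have : (MonoidAlgebra.single (g * h : G)⁻¹ (1:ℤ)) =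
      MonoidAlgebra.single ((h⁻¹ : H) : G) (1:ℤ) * MonoidAlgebra.single g⁻¹ 1 := by
        simp [MonoidAlgebra.single_mul_single]
    simp only [F]
    rw [this, mul_smul, hφ', coeff_single_smul]
    simp
  have hfin : ∀ m, (Function.support (F m)).Finite := fun m => by
    have : Function.support (F m) ⊆ ⋃ q : G ⧸ H, Set.image (fun h : H => q.out * (h : G))
        ((φ' (MonoidAlgebra.single q.out⁻¹ (1:ℤ) • m)).coeff.support : Set H) := by
      intro g hg
      obtain ⟨h, hh⟩ := QuotientGroup.mk_out_eq_mul H g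
      have e : g = (QuotientGroup.mk g : G ⧸ H).out * ((h⁻¹ : H) : G) := by simp [hh]
      refine Set.mem_iUnion.2 ⟨QuotientGroup.mk g, h⁻¹, ?_, e.symm⟩
      rw [Function.mem_support, e, hF] at hg
      simpa using hg
    exact (Set.finite_iUnion fun q => (Finset.finite_toSet _).image _).subset this
  let ψ' : M →+ MonoidAlgebra ℤ G :=
    { toFun := fun m => .ofCoeff (Finsupp.ofSupportFinite (F m) (hfin m))
      map_zero' := by
        apply MonoidAlgebra.coeff_injective
        ext g
        change F 0 g = 0
        simp [F]
      map_add' := fun a b => by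
        apply MonoidAlgebra.coeff_injective
        ext g
        change F (a + b) g = F a g + F b g
        simp [F] }
  have hψ' : ∀ m g, (ψ' m).coeff g = F m g := fun m g => rfl
  refine ⟨ModuleCat.ofHom { toFun := ψ', map_add' := ψ'.map_add, map_smul' := smul_of_single (Y := MonoidAlgebra ℤ G) ψ' fun k x => ?_ }, ?_⟩
  · apply MonoidAlgebra.coeff_injective
    ext g
    rw [smul_eq_mul, coeff_single_smul, hψ', hψ']
    simp only [F, smul_smul, MonoidAlgebra.single_mul_single]
    simp
  · ext (m : M) : 2
    apply MonoidAlgebra.coeff_injective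
    ext h
    rw [comp_apply]
    erw [tau_coeff]
    change F m h = (φ' m).coeff h
    have := hF m 1 h
    rw [one_mul] at this
    rw [this]
    simp [← MonoidAlgebra.one_def]

noncomputable def homIso [H.FiniteIndex] (M : ModuleCat.{0} (MonoidAlgebra ℤ G)) :
    ModuleCat.of ℤ (M ⟶ ModuleCat.of _ (MonoidAlgebra ℤ G)) ≅
    ModuleCat.of ℤ ((ModuleCat.restrictScalars (inc H)).obj M ⟶
      ModuleCat.of _ (MonoidAlgebra ℤ H)) :=
  (AddEquiv.toIntLinearEquiv (AddEquiv.ofBijective (comp H M)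
    ⟨comp_injective H M, comp_surjective H M⟩)).toModuleIso

noncomputable def cplxIso [H.FiniteIndex] (C : ChainComplex (ModuleCat.{0} (MonoidAlgebra ℤ G)) ℕ) :
    C.linearYonedaObj ℤ (ModuleCat.of _ (MonoidAlgebra ℤ G)) ≅
    ChainComplex.linearYonedaObj
      (((ModuleCat.restrictScalars (inc H)).mapHomologicalComplex _).obj C) ℤ
      (ModuleCat.of _ (MonoidAlgebra ℤ H)) :=
  HomologicalComplex.Hom.isoOfComponents (fun n => homIso H (C.X n)) fun i j _ => by
    apply ModuleCat.hom_ext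
    apply LinearMap.ext
    intro φ
    rfl

instance : (ModuleCat.restrictScalars.{0, 0, 0} (inc H)).PreservesHomology where
  preservesKernels _ _ _ := inferInstance
  preservesCokernels _ _ _ := inferInstance

noncomputable def shapiro [H.FiniteIndex] (M : ModuleCat.{0} (MonoidAlgebra ℤ G)) (i : ℕ) :
    ((Ext ℤ (ModuleCat (MonoidAlgebra ℤ H)) i).obj
      (op ((ModuleCat.restrictScalars (inc H)).obj M))).obj
      (ModuleCat.of (MonoidAlgebra ℤ H) (MonoidAlgebra ℤ H)) ≅
    ((Ext ℤ (ModuleCat (MonoidAlgebra ℤ G)) i).obj (op M)).obj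
      (ModuleCat.of (MonoidAlgebra ℤ G) (MonoidAlgebra ℤ G)) :=
  ((ModuleCat.restrictScalars (inc H)).mapProjectiveResolution
      (projectiveResolution M)).isoExt i _ ≪≫
    (HomologicalComplex.homologyFunctor _ _ i).mapIso
      (cplxIso H (projectiveResolution M).complex).symm ≪≫
    ((projectiveResolution M).isoExt i _).symm

end Shap

/-- Let `H ≤ G` be of finite index and `A` a `ℤG`-module, finite as an abelian group,
whose restricted `ℤH`-module structure (i.e. the `ℤH`-action is the restriction of the
`ℤG`-action along `H ≤ G`) is trivial.  Then for every `i`,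
`Ext^i_{ℤH}(A, ℤH) ≅ Ext^i_{ℤG}(A, ℤG)` as abelian groups (Eckmann–Shapiro combined with
`Hom_{ℤH}(ℤG, ℤH) ≅ ℤG`). -/
theorem stmt15 (G : Type) [Group G] (H : Subgroup G) [H.FiniteIndex]
    (A : Type) [AddCommGroup A] [Finite A]
    [Module (MonoidAlgebra ℤ G) A] [Module (MonoidAlgebra ℤ H) A]
    (hres : ∀ (h : H) (a : A),
      (MonoidAlgebra.single h (1 : ℤ)) • a = (MonoidAlgebra.single (h : G) (1 : ℤ)) • a)
    (htriv : ∀ (h : H) (a : A), (MonoidAlgebra.single (h : G) (1 : ℤ)) • a = a)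
    (i : ℕ) :
    Nonempty ((extRG H i A) ≃+ (extRG G i A)) := by
  let R := (ModuleCat.restrictScalars (Shap.inc H)).obj (ModuleCat.of (MonoidAlgebra ℤ G) A)
  let φ : A →+ R := AddMonoidHom.id A
  let e : A ≃ₗ[MonoidAlgebra ℤ H] R :=
    { AddEquiv.refl A with
      map_smul' := Shap.smul_of_single φ fun k x => by
        change MonoidAlgebra.single k (1 : ℤ) • x =
          Shap.inc H (MonoidAlgebra.single k (1 : ℤ)) • x
        rw [hres, Shap.inc_single] }
  let e' : ModuleCat.of (MonoidAlgebra ℤ H) A ≅ R := e.toModuleIso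
  exact ⟨((((Ext ℤ (ModuleCat (MonoidAlgebra ℤ H)) i).mapIso e'.op.symm).app
      (ModuleCat.of (MonoidAlgebra ℤ H) (MonoidAlgebra ℤ H))) ≪≫
    Shap.shapiro H (ModuleCat.of (MonoidAlgebra ℤ G) A) i).toLinearEquiv.toAddEquiv⟩
end
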